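/- Consider the two-player game G constructed from a finite simple graph H as described, with desired sets O_1 = O_2 = C (the color-choice strategies). If there exists a payment promise 𝒱 such that 𝒳⋆_{G[𝒱]} = O_1 × O_2 and cost(𝒱) ≤ 1, then H admits a proper 3-coloring. -/

import Mathlib

/-!
In a finite game every dominated strategy is dominated by an undominated one, so if exactly the
color choices are undominated after payments, then every vertex strategy `v` of each player is
dominated by some color choice `(w, c)`. Against `(v, c)`, a color choice `(w, c)` with `w ≠ v`
earns at least `2` less than `v`, a gap that a cost below `2` cannot bridge; hence `w = v`, and each
player `i` obtains a coloring `φ i`.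

The choice `(v, φ i v)` earns `1` less than `v` against every color choice in conflict with it: a
different color at `v`, or the same color at a neighbor. Player `i` must be paid this difference. If
`(u, φ 0 u)` were in conflict with `(w, φ 1 w)`, both players would be paid at least `1` at this
profile. So no conflict occurs, that is, `φ 0 = φ 1` is a proper coloring.
-/

/-- In a game with player set `ι` and strategy sets `S i`, strategy `x` of player `i`
(weakly) dominates strategy `y`: `x` is at least as good against every profile of the
other players' strategies and strictly better against at least one. -/
def Dominates {ι : Type*} [DecidableEq ι] {S : ι → Type*}
    (U : ι → (∀ j, S j) → ℝ) (i : ι) (x y : S i) : Prop :=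
  (∀ σ : ∀ j, S j, U i (Function.update σ i y) ≤ U i (Function.update σ i x)) ∧
  (∃ σ : ∀ j, S j, U i (Function.update σ i y) < U i (Function.update σ i x))

/-- A strategy of player `i` is undominated if no strategy of player `i` dominates it. -/
def Undominated {ι : Type*} [DecidableEq ι] {S : ι → Type*}
    (U : ι → (∀ j, S j) → ℝ) (i : ι) (x : S i) : Prop :=
  ¬ ∃ y : S i, Dominates U i y x

/-- The set `𝒳⋆` of strategy profiles consisting entirely of undominated strategies. -/
def UndomProfiles {ι : Type*} [DecidableEq ι] {S : ι → Type*}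
    (U : ι → (∀ j, S j) → ℝ) : Set (∀ j, S j) :=
  {σ | ∀ i, Undominated U i (σ i)}

/-- The cost of a payment promise `V` for the game with utilities `U`:
the maximum, over undominated profiles of the modified game `G[V]`,
of the total payment. -/
noncomputable def gameCost {ι : Type*} [DecidableEq ι] [Fintype ι] {S : ι → Type*}
    (U V : ι → (∀ j, S j) → ℝ) : ℝ :=
  sSup ((fun σ => ∑ i, V i σ) '' UndomProfiles (fun i σ => U i σ + V i σ))

/-- The rectangular strategy-profile region `O_1 × ⋯ × O_n`. -/
def rectSet {ι : Type*} {S : ι → Type*} (O : ∀ i, Set (S i)) : Set (∀ j, S j) :=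
  {σ | ∀ i, σ i ∈ O i}

/-- The common strategy set of both players: a vertex strategy (left), a color-choice
strategy `(v, c)` (middle), or the dummy strategy `d_{(v,c)}` (right); the bijection
from color-choice strategies to dummy strategies is the identity on `V × Fin 3`. -/
abbrev ColStrat (V : Type*) : Type _ := V ⊕ ((V × Fin 3) ⊕ (V × Fin 3))

/-- Utility of player 1 in the 3-coloring game (first argument is player 1's strategy;
all unspecified values are 0):
`U_1((v,c₁),(v,c₂)) = 3` if `c₁ = c₂` and `2` otherwise; for adjacent `u, v`:
`U_1((u,c₁),(v,c₂)) = 1` if `c₁ = c₂` and `2` otherwise; `U_1(v,(v,c)) = 3`;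
`U_1(v,(u,c)) = 2` for `u` adjacent to `v`; `U_1(x, d_x) = 1` for color-choice `x`. -/
def colU1 {V : Type*} [DecidableEq V] (H : SimpleGraph V) [DecidableRel H.Adj] :
    ColStrat V → ColStrat V → ℝ
  | Sum.inr (Sum.inl (v, c1)), Sum.inr (Sum.inl (w, c2)) =>
      if w = v then (if c2 = c1 then 3 else 2)
      else if H.Adj v w then (if c2 = c1 then 1 else 2) else 0
  | Sum.inl v, Sum.inr (Sum.inl (w, _)) =>
      if w = v then 3 else if H.Adj v w then 2 else 0
  | Sum.inr (Sum.inl x), Sum.inr (Sum.inr y) => if y = x then 1 else 0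
  | _, _ => 0

/-- The symmetric two-player game built from the graph `H`. -/
def colGame {V : Type*} [DecidableEq V] (H : SimpleGraph V) [DecidableRel H.Adj] :
    Fin 2 → (Fin 2 → ColStrat V) → ℝ :=
  fun i σ => if i = 0 then colU1 H (σ 0) (σ 1) else colU1 H (σ 1) (σ 0)

/-- The desired strategy set `O_1 = O_2 = C`, the set of color-choice strategies. -/
def colDesired (V : Type*) : Set (ColStrat V) :=
  {s | ∃ p : V × Fin 3, s = Sum.inr (Sum.inl p)}

section Games

variable {ι : Type*} [DecidableEq ι] {S : ι → Type*}

/-- The utilities of the game `G[V]`, in which the payments `V` are added to the utilities `U`.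
Reducible, so that it agrees with the sums written out in `gameCost`. -/
abbrev withPayments (U V : ι → (∀ j, S j) → ℝ) : ι → (∀ j, S j) → ℝ :=
  fun i σ => U i σ + V i σ

section Dominance

variable {U V : ι → (∀ j, S j) → ℝ} {i : ι} {x y z : S i}

theorem Dominates.trans (hxy : Dominates U i x y) (hyz : Dominates U i y z) :
    Dominates U i x z :=
  ⟨fun σ => (hyz.1 σ).trans (hxy.1 σ), hyz.2.imp fun σ hσ => hσ.trans_le (hxy.1 σ)⟩

theorem Dominates.irrefl (x : S i) : ¬ Dominates U i x x :=
  fun h => h.2.elim fun _ hσ => hσ.false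

theorem exists_undominated_dominates [Finite (S i)] (hy : ¬ Undominated U i y) :
    ∃ x, Undominated U i x ∧ Dominates U i x y := by
  have : IsTrans (S i) (Dominates U i) := ⟨fun _ _ _ => Dominates.trans⟩
  have : Std.Irrefl (Dominates U i) := ⟨Dominates.irrefl⟩
  have wf : WellFounded (Dominates U i) := Finite.wellFounded_of_trans_of_irrefl _
  obtain ⟨x, hxy, hmin⟩ := wf.has_min {x | Dominates U i x y} (not_not.mp hy)
  exact ⟨x, fun ⟨z, hzx⟩ => hmin z (hzx.trans hxy) hzx, hxy⟩

theorem Dominates.utility_sub_le_payment (hV : ∀ σ, 0 ≤ V i σ)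
    (h : Dominates (withPayments U V) i x y) (σ : ∀ j, S j) :
    U i (Function.update σ i y) - U i (Function.update σ i x) ≤ V i (Function.update σ i x) := by
  linarith [h.1 σ, hV (Function.update σ i y)]

theorem undominated_iff_mem_of_undomProfiles_eq_rectSet {O : ∀ i, Set (S i)}
    (hU : UndomProfiles U = rectSet O) (hO : (rectSet O).Nonempty) :
    Undominated U i x ↔ x ∈ O i := by
  have hundom : UndomProfiles U = Set.univ.pi fun i => {x | Undominated U i x} := by
    ext; simp [UndomProfiles]
  have hrect : rectSet O = Set.univ.pi O := by
    ext; simp [rectSet]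
  have hset : {x | Undominated U i x} = O i := by
    have hpi : (Set.univ.pi fun i => {x | Undominated U i x}) = Set.univ.pi O := by
      rw [← hundom, hU, hrect]
    have hne : (Set.univ.pi O).Nonempty := hrect ▸ hO
    rw [← Set.eval_image_univ_pi (i := i) hne, ← hpi, Set.eval_image_univ_pi (hpi ▸ hne)]
  exact Set.ext_iff.mp hset x

end Dominance

section Cost

variable [Fintype ι] [∀ i, Finite (S i)] {U V : ι → (∀ j, S j) → ℝ} {σ : ∀ j, S j}

theorem sum_payments_le_gameCost (hσ : σ ∈ UndomProfiles (withPayments U V)) :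
    ∑ i, V i σ ≤ gameCost U V :=
  le_csSup (Set.toFinite _).bddAbove ⟨σ, hσ, rfl⟩

theorem payment_le_gameCost (hV : ∀ i σ, 0 ≤ V i σ)
    (hσ : σ ∈ UndomProfiles (withPayments U V)) (i : ι) : V i σ ≤ gameCost U V :=
  (Finset.single_le_sum (fun j _ => hV j σ) (Finset.mem_univ i)).trans
    (sum_payments_le_gameCost hσ)

end Cost

end Games

section TwoPlayers

variable {S : Type*}

/-- The two-player profile in which player `i` plays `x` and the opponent plays `y`. Written as an
update of a constant profile to match the form in which `Dominates` compares strategies. -/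
def matchup (i : Fin 2) (x y : S) : Fin 2 → S :=
  Function.update (fun _ => y) i x

theorem matchup_one (x y : S) : matchup 1 y x = matchup 0 x y := by
  funext j
  fin_cases j <;> simp [matchup]

theorem matchup_mem_rectSet {O : Set S} {x y : S} (i : Fin 2) (hx : x ∈ O) (hy : y ∈ O) :
    matchup i x y ∈ rectSet fun _ => O := by
  intro j
  by_cases hj : j = i
  · simpa [matchup, hj] using hx
  · simpa [matchup, hj] using hy

end TwoPlayers

section ColoringGame

variable {V : Type*}

/-- The color-choice strategy `(v, c)` of the coloring game, for `p = (v, c)`. -/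
abbrev colorChoice (p : V × Fin 3) : ColStrat V := Sum.inr (Sum.inl p)

theorem matchup_colorChoice_mem_rectSet (i : Fin 2) (p q : V × Fin 3) :
    matchup i (colorChoice p) (colorChoice q) ∈ rectSet fun _ : Fin 2 => colDesired V :=
  matchup_mem_rectSet i ⟨p, rfl⟩ ⟨q, rfl⟩

/-- Two color choices are in conflict if they give one vertex two different colors, or two adjacent
vertices the same color. -/
def Conflict (H : SimpleGraph V) (p q : V × Fin 3) : Prop :=
  (p.1 = q.1 ∧ p.2 ≠ q.2) ∨ (H.Adj p.1 q.1 ∧ p.2 = q.2)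

theorem Conflict.symm {H : SimpleGraph V} {p q : V × Fin 3} (h : Conflict H p q) :
    Conflict H q p :=
  h.imp (.imp Eq.symm Ne.symm) (.imp SimpleGraph.Adj.symm Eq.symm)

variable [DecidableEq V] {H : SimpleGraph V} [DecidableRel H.Adj]

theorem colGame_matchup (i : Fin 2) (x y : ColStrat V) :
    colGame H i (matchup i x y) = colU1 H x y := by
  fin_cases i <;> simp [colGame, matchup]

theorem Conflict.colU1_add_one {p q : V × Fin 3} (h : Conflict H p q) :
    colU1 H (colorChoice p) (colorChoice q) + 1 = colU1 H (Sum.inl p.1) (colorChoice q) := by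
  obtain ⟨u, c⟩ := p
  obtain ⟨w, d⟩ := q
  rcases h with ⟨rfl, hcolor⟩ | ⟨hadj, rfl⟩
  · norm_num [colU1, hcolor.symm]
  · norm_num [colU1, hadj, hadj.ne']

theorem colU1_add_two_le_of_ne {v w : V} (hne : w ≠ v) (c : Fin 3) :
    colU1 H (colorChoice (w, c)) (colorChoice (v, c)) + 2 ≤
      colU1 H (Sum.inl v) (colorChoice (v, c)) := by
  simp only [colU1, hne.symm, if_true, if_false]
  split_ifs <;> norm_num

variable {W : Fin 2 → (Fin 2 → ColStrat V) → ℝ} {i : Fin 2}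

theorem colU1_sub_le_payment_of_dominates (hW : ∀ i σ, 0 ≤ W i σ) {x y : ColStrat V}
    (h : Dominates (withPayments (colGame H) W) i x y) (z : ColStrat V) :
    colU1 H y z - colU1 H x z ≤ W i (matchup i x z) := by
  have hgap : colGame H i (matchup i y z) - colGame H i (matchup i x z) ≤ W i (matchup i x z) :=
    h.utility_sub_le_payment (hW i) fun _ => z
  rwa [colGame_matchup, colGame_matchup] at hgap

theorem Conflict.one_le_payment (hW : ∀ i σ, 0 ≤ W i σ) {p q : V × Fin 3}
    (hpq : Conflict H p q)
    (h : Dominates (withPayments (colGame H) W) i (colorChoice p) (Sum.inl p.1)) :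
    1 ≤ W i (matchup i (colorChoice p) (colorChoice q)) := by
  linarith [hpq.colU1_add_one, colU1_sub_le_payment_of_dominates hW h (colorChoice q)]

theorem two_le_payment_of_dominates_of_ne (hW : ∀ i σ, 0 ≤ W i σ) {v w : V} (hne : w ≠ v)
    {c : Fin 3} (h : Dominates (withPayments (colGame H) W) i (colorChoice (w, c)) (Sum.inl v)) :
    2 ≤ W i (matchup i (colorChoice (w, c)) (colorChoice (v, c))) := by
  linarith [colU1_add_two_le_of_ne (H := H) hne c,
    colU1_sub_le_payment_of_dominates hW h (colorChoice (v, c))]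

variable [Finite V]

theorem exists_colorChoice_dominates (hW : ∀ i σ, 0 ≤ W i σ)
    (hU : UndomProfiles (withPayments (colGame H) W) = rectSet fun _ : Fin 2 => colDesired V)
    (hcost : gameCost (colGame H) W < 2) (i : Fin 2) (v : V) :
    ∃ c, Dominates (withPayments (colGame H) W) i (colorChoice (v, c)) (Sum.inl v) := by
  have hundom : ∀ {x}, Undominated (withPayments (colGame H) W) i x ↔ x ∈ colDesired V :=
    undominated_iff_mem_of_undomProfiles_eq_rectSet hU
      ⟨_, matchup_colorChoice_mem_rectSet i (v, 0) (v, 0)⟩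
  have hv : ¬ Undominated (withPayments (colGame H) W) i (Sum.inl v) := by
    simp [hundom, colDesired]
  obtain ⟨x, hx, hdom⟩ := exists_undominated_dominates hv
  obtain ⟨⟨w, c⟩, rfl⟩ := hundom.mp hx
  obtain rfl : w = v := by
    by_contra hne
    have hpay := two_le_payment_of_dominates_of_ne hW hne hdom
    have hmem := hU ▸ matchup_colorChoice_mem_rectSet i (w, c) (v, c)
    linarith [payment_le_gameCost hW hmem i]
  exact ⟨c, hdom⟩

theorem not_conflict_of_dominates (hW : ∀ i σ, 0 ≤ W i σ)
    (hU : UndomProfiles (withPayments (colGame H) W) = rectSet fun _ : Fin 2 => colDesired V)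
    (hcost : gameCost (colGame H) W < 2) {p q : V × Fin 3}
    (hp : Dominates (withPayments (colGame H) W) 0 (colorChoice p) (Sum.inl p.1))
    (hq : Dominates (withPayments (colGame H) W) 1 (colorChoice q) (Sum.inl q.1)) :
    ¬ Conflict H p q := by
  intro hpq
  have hpay₀ := hpq.one_le_payment hW hp
  have hpay₁ := hpq.symm.one_le_payment hW hq
  rw [matchup_one] at hpay₁
  have hsum := sum_payments_le_gameCost (hU ▸ matchup_colorChoice_mem_rectSet 0 p q)
  rw [Fin.sum_univ_two] at hsum
  linarith

end ColoringGame

theorem coloring_game_backward_general {V : Type*} [Finite V] [DecidableEq V]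
    (H : SimpleGraph V) [DecidableRel H.Adj]
    (himpl : ∃ W : Fin 2 → (Fin 2 → ColStrat V) → ℝ,
      (∀ i σ, 0 ≤ W i σ) ∧
      UndomProfiles (fun i σ => colGame H i σ + W i σ) =
        rectSet (fun _ : Fin 2 => colDesired V) ∧
      gameCost (colGame H) W < 2) :
    ∃ φ : V → Fin 3, ∀ u w : V, H.Adj u w → φ u ≠ φ w := by
  obtain ⟨W, hW, hU, hcost⟩ := himpl
  choose φ hφ using exists_colorChoice_dominates hW hU hcost
  have hconflict : ∀ u w, ¬ Conflict H (u, φ 0 u) (w, φ 1 w) := fun u w =>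
    not_conflict_of_dominates hW hU hcost (hφ 0 u) (hφ 1 w)
  have hagree : ∀ v, φ 0 v = φ 1 v := fun v =>
    not_not.mp fun hne => hconflict v v (.inl ⟨rfl, hne⟩)
  exact ⟨φ 0, fun u w huw heq => hconflict u w (.inr ⟨huw, heq.trans (hagree w)⟩)⟩

/-- if the constructed two-player game has a payment promise implementing
`O_1 × O_2` exactly with cost at most 1, then `H` admits a proper 3-coloring. -/
theorem coloring_game_backward {V : Type*} [Fintype V] [DecidableEq V]
    (H : SimpleGraph V) [DecidableRel H.Adj]
    (himpl : ∃ W : Fin 2 → (Fin 2 → ColStrat V) → ℝ,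
      (∀ i σ, 0 ≤ W i σ) ∧
      UndomProfiles (fun i σ => colGame H i σ + W i σ) =
        rectSet (fun _ : Fin 2 => colDesired V) ∧
      gameCost (colGame H) W ≤ 1) :
    ∃ φ : V → Fin 3, ∀ u w : V, H.Adj u w → φ u ≠ φ w := by
  obtain ⟨W, hW, hU, hcost⟩ := himpl
  exact coloring_game_backward_general H ⟨W, hW, hU, hcost.trans_lt one_lt_two⟩
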